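/- Only the strongly connected component containing u can split when the edge (u, v) is removed: if E u v holds, E'' is obtained from E by removing the edge (u, v), vertices x and y are strongly connected under E, and x is not strongly connected to u under E, then x and y remain strongly connected under E''. -/

import Mathlib

/-! A path from `x` to `y`, where `y` reaches back to `x`, stays inside the strongly connected
component of `x`. If it used the edge `(u, v)`, then `u` would lie in that component; so when it
does not, every edge of the path survives the removal. Applying this to a path from `x` to `y` and
to one from `y` to `x` gives the result. -/

def SConn {V : Type*} (E : V → V → Prop) (x y : V) : Prop :=
  Relation.ReflTransGen E x y ∧ Relation.ReflTransGen E y x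

theorem reach_of_not_sconn {V : Type*} {E E'' : V → V → Prop} {u v : V}
    (hE'' : ∀ a b, E'' a b ↔ E a b ∧ ¬(a = u ∧ b = v)) {x y : V}
    (hxy : Relation.ReflTransGen E x y) (hyx : Relation.ReflTransGen E y x)
    (hxu : ¬ SConn E x u) : Relation.ReflTransGen E'' x y := by
  induction hxy with
  | refl => exact .refl
  | @tail b c hxb hbc ih =>
    have hbx : Relation.ReflTransGen E b x := .head hbc hyx
    refine (ih hbx).tail ((hE'' b c).2 ⟨hbc, ?_⟩)
    rintro ⟨rfl, -⟩
    exact hxu ⟨hxb, hbx⟩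

theorem only_scc_of_u_splits {V : Type*} (E : V → V → Prop) (u v : V)
    (huv : E u v)
    (E'' : V → V → Prop) (hE'' : ∀ a b, E'' a b ↔ E a b ∧ ¬(a = u ∧ b = v))
    (x y : V) (hxy : SConn E x y) (hxu : ¬ SConn E x u) :
    SConn E'' x y := by
  refine ⟨reach_of_not_sconn hE'' hxy.1 hxy.2 hxu, reach_of_not_sconn hE'' hxy.2 hxy.1 ?_⟩
  exact fun hyu => hxu ⟨hxy.1.trans hyu.1, hyu.2.trans hxy.2⟩
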